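/- (Product estimate in the weighted spaces.) Let m, n ∈ {3,4,5} and α ∈ (0,1). There is a constant C, depending only on m, n, α, Ξ₀ and the cutoff χ, such that: if Q₁ ∈ 𝔠⁰_{(m)} and Q₂ ∈ 𝔠⁰_{(n)}, then Q₁·Q₂ ∈ 𝔠⁰_{(n)} and ‖Q₁·Q₂;𝔠⁰_{(n)}‖ ≤ C·‖Q₁;𝔠⁰_{(m)}‖·‖Q₂;𝔠⁰_{(n)}‖; and if Q₁ ∈ 𝔠^{0,α}_{(m)} and Q₂ ∈ 𝔠^{0,α}_{(n)}, then Q₁·Q₂ ∈ 𝔠^{0,α}_{(n)} and ‖Q₁·Q₂;𝔠^{0,α}_{(n)}‖ ≤ C·‖Q₁;𝔠^{0,α}_{(m)}‖·‖Q₂;𝔠^{0,α}_{(n)}‖. -/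

import Mathlib

open Real Metric ENNReal

noncomputable section

/-- Partial derivative in the first coordinate `ϖ`. -/
def d1 (f : ℝ × ℝ → ℝ) : ℝ × ℝ → ℝ := fun p => fderiv ℝ f p (1, 0)

/-- Partial derivative in the second coordinate `z`. -/
def d3 (f : ℝ × ℝ → ℝ) : ℝ × ℝ → ℝ := fun p => fderiv ℝ f p (0, 1)

/-- `r = √(ϖ² + z²)`. -/
def rr (p : ℝ × ℝ) : ℝ := Real.sqrt (p.1 ^ 2 + p.2 ^ 2)

/-- The near part `Q^{[0]} = χ(r/R₀)·Q`. -/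
def cut0 (χ : ℝ → ℝ) (R₀ : ℝ) (Q : ℝ × ℝ → ℝ) : ℝ × ℝ → ℝ :=
  fun p => χ (rr p / R₀) * Q p

/-- The far part `Q^{[∞]} = (1 − χ(r/R₀))·Q`. -/
def cutInf (χ : ℝ → ℝ) (R₀ : ℝ) (Q : ℝ × ℝ → ℝ) : ℝ × ℝ → ℝ :=
  fun p => (1 - χ (rr p / R₀)) * Q p

/-- The lift `Q^{♭(n)}(ξ) = Q(a·√(ξ₁²+⋯+ξ_{n−1}²), a·ξₙ)`. -/
def flat (n : ℕ) (a : ℝ) (Q : ℝ × ℝ → ℝ) (ξ : EuclideanSpace ℝ (Fin n)) : ℝ :=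
  Q (a * Real.sqrt (∑ i : Fin n, if (i : ℕ) < n - 1 then (ξ i) ^ 2 else 0),
     a * ∑ i : Fin n, if (i : ℕ) = n - 1 then ξ i else 0)

/-- The Kelvin inversion of coordinates (parameter `Ξ₀`). -/
def kelvinPt (n : ℕ) (Ξ₀ : ℝ) (ξ : EuclideanSpace ℝ (Fin n)) : EuclideanSpace ℝ (Fin n) :=
  ((Ξ₀ / ‖ξ‖) ^ 2 : ℝ) • ξ

/-- The Kelvin transform of a function. -/
def kelvin (n : ℕ) (Ξ₀ : ℝ) (g : EuclideanSpace ℝ (Fin n) → ℝ)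
    (ξs : EuclideanSpace ℝ (Fin n)) : ℝ :=
  (Ξ₀ / ‖ξs‖) ^ (n - 2) * g (kelvinPt n Ξ₀ ξs)

/-- The closed ball of radius `Ξ` in `ℝⁿ`. -/
def cb (n : ℕ) (Ξ : ℝ) : Set (EuclideanSpace ℝ (Fin n)) :=
  Metric.closedBall (0 : EuclideanSpace ℝ (Fin n)) Ξ

/-- `⨆`-style `C^l` norm (values in `ℝ≥0∞`). -/
def cNormE (n l : ℕ) (f : EuclideanSpace ℝ (Fin n) → ℝ) (s : Set (EuclideanSpace ℝ (Fin n))) :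
    ℝ≥0∞ :=
  ⨆ i ∈ Finset.range (l + 1), ⨆ x ∈ s,
    (‖iteratedFDerivWithin ℝ i f s x‖₊ : ℝ≥0∞)

/-- Hölder seminorm of the `l`-th derivative (values in `ℝ≥0∞`). -/
def holderSemiE (n l : ℕ) (α : ℝ) (f : EuclideanSpace ℝ (Fin n) → ℝ)
    (s : Set (EuclideanSpace ℝ (Fin n))) : ℝ≥0∞ :=
  ⨆ x ∈ s, ⨆ y ∈ s, ⨆ (_ : x ≠ y ∧ dist x y ≤ 1),
    (‖iteratedFDerivWithin ℝ l f s x - iteratedFDerivWithin ℝ l f s y‖₊ : ℝ≥0∞) /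
      ENNReal.ofReal (dist x y ^ α)

/-- The `C^{l,α}` norm (values in `ℝ≥0∞`). -/
def hNormE (n l : ℕ) (α : ℝ) (f : EuclideanSpace ℝ (Fin n) → ℝ)
    (s : Set (EuclideanSpace ℝ (Fin n))) : ℝ≥0∞ :=
  cNormE n l f s + holderSemiE n l α f s

/-- Membership of an extension in `C^l` on a set. -/
def MemC (n l : ℕ) (f : EuclideanSpace ℝ (Fin n) → ℝ) (s : Set (EuclideanSpace ℝ (Fin n))) :
    Prop :=
  ContDiffOn ℝ l f s

/-- Membership of an extension in `C^{l,α}` on a set. -/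
def MemCHolder (n l : ℕ) (α : ℝ) (f : EuclideanSpace ℝ (Fin n) → ℝ)
    (s : Set (EuclideanSpace ℝ (Fin n))) : Prop :=
  ContDiffOn ℝ l f s ∧ holderSemiE n l α f s < ⊤

/-- Membership of `Q` in the weighted space `𝔠^l_{(n)}` (symmetry in `z` not included). -/
def MemChunk (n l : ℕ) (a Ξ₀ : ℝ) (χ : ℝ → ℝ) (Q : ℝ × ℝ → ℝ) : Prop :=
  MemC n l (flat n a (cut0 χ (a * Ξ₀) Q)) (cb n (2 * Ξ₀)) ∧
  ∃ h : EuclideanSpace ℝ (Fin n) → ℝ, MemC n l h (cb n Ξ₀) ∧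
    Set.EqOn h (kelvin n Ξ₀ (flat n a (cutInf χ (a * Ξ₀) Q))) (cb n Ξ₀ \ {0})

/-- The norm `‖Q; 𝔠^l_{(n)}‖` (values in `ℝ≥0∞`). -/
def chunkNormE (n l : ℕ) (a Ξ₀ : ℝ) (χ : ℝ → ℝ) (Q : ℝ × ℝ → ℝ) : ℝ≥0∞ :=
  max (cNormE n l (flat n a (cut0 χ (a * Ξ₀) Q)) (cb n (2 * Ξ₀)))
    (⨅ (h : EuclideanSpace ℝ (Fin n) → ℝ)
       (_ : MemC n l h (cb n Ξ₀) ∧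
         Set.EqOn h (kelvin n Ξ₀ (flat n a (cutInf χ (a * Ξ₀) Q))) (cb n Ξ₀ \ {0})),
      cNormE n l h (cb n Ξ₀))

/-- Membership of `Q` in the weighted space `𝔠^{l,α}_{(n)}` (symmetry in `z` not included). -/
def MemChunkH (n l : ℕ) (α : ℝ) (a Ξ₀ : ℝ) (χ : ℝ → ℝ) (Q : ℝ × ℝ → ℝ) : Prop :=
  MemCHolder n l α (flat n a (cut0 χ (a * Ξ₀) Q)) (cb n (2 * Ξ₀)) ∧
  ∃ h : EuclideanSpace ℝ (Fin n) → ℝ, MemCHolder n l α h (cb n Ξ₀) ∧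
    Set.EqOn h (kelvin n Ξ₀ (flat n a (cutInf χ (a * Ξ₀) Q))) (cb n Ξ₀ \ {0})

/-- The norm `‖Q; 𝔠^{l,α}_{(n)}‖` (values in `ℝ≥0∞`). -/
def chunkNormHE (n l : ℕ) (α : ℝ) (a Ξ₀ : ℝ) (χ : ℝ → ℝ) (Q : ℝ × ℝ → ℝ) : ℝ≥0∞ :=
  max (hNormE n l α (flat n a (cut0 χ (a * Ξ₀) Q)) (cb n (2 * Ξ₀)))
    (⨅ (h : EuclideanSpace ℝ (Fin n) → ℝ)
       (_ : MemCHolder n l α h (cb n Ξ₀) ∧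
         Set.EqOn h (kelvin n Ξ₀ (flat n a (cutInf χ (a * Ξ₀) Q))) (cb n Ξ₀ \ {0})),
      hNormE n l α h (cb n Ξ₀))

/-!
A function of `(ϖ, z)` has essentially the same lift in every dimension: the lifts to `ℝᵐ` and `ℝⁿ`
differ by composition with the `1`-Lipschitz map `axialTransfer`. If the Kelvin factor
`(Ξ₀/|ξ|)^(n-2)` of the product is given to `Q₂`, then `Q₁` only enters through its lift without a
cutoff, on `|ξ| ≤ 2Ξ₀` and, composed with the inversion, on `|ξ| ≤ Ξ₀`. There it is the sum of the
part for which a Hölder bound is given, possibly multiplied by the power `(|ξ|/Ξ₀)^(m-2)`, and of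
the other part composed with the inversion. The latter vanishes near the origin by the choice of
the cutoff, and away from the origin the inversion is Lipschitz.
-/

open scoped NNReal

/-! ### Quantitative Hölder bounds -/

section HolderBound

variable {X Y F : Type*} [PseudoMetricSpace X] [PseudoMetricSpace Y] [SeminormedAddCommGroup F]
  {M N B K α : ℝ≥0} {f g : X → F} {s : Set X}

/-- `f` is bounded by `M` on `s` and has Hölder constant `M` for the exponent `α` there, between
points at any distance. Continuity is a separate field so that `α = 0` describes the bounded
continuous functions. -/
structure HolderBoundOn (M α : ℝ≥0) (f : X → F) (s : Set X) : Prop where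
  continuousOn : ContinuousOn f s
  nnnorm_le : ∀ x ∈ s, ‖f x‖₊ ≤ M
  holderOnWith : HolderOnWith M α f s

lemma holderOnWith_iff_nndist_le {f : X → Y} :
    HolderOnWith M α f s ↔
      ∀ x ∈ s, ∀ y ∈ s, nndist (f x) (f y) ≤ M * nndist x y ^ (α : ℝ) := by
  refine ⟨fun h x hx y hy ↦ h.nndist_le hx hy, fun h x hx y hy ↦ ?_⟩
  rw [edist_nndist, edist_nndist, ← ENNReal.coe_rpow_of_nonneg _ α.coe_nonneg]
  exact_mod_cast h x hx y hy

namespace HolderBoundOn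

lemma congr (hf : HolderBoundOn M α f s) (hgf : Set.EqOn g f s) : HolderBoundOn M α g s where
  continuousOn := hf.continuousOn.congr hgf
  nnnorm_le x hx := hgf hx ▸ hf.nnnorm_le x hx
  holderOnWith x hx y hy := by
    rw [hgf hx, hgf hy]
    exact hf.holderOnWith x hx y hy

lemma mono {t : Set X} (hf : HolderBoundOn M α f t) (hst : s ⊆ t) : HolderBoundOn M α f s where
  continuousOn := hf.continuousOn.mono hst
  nnnorm_le x hx := hf.nnnorm_le x (hst hx)
  holderOnWith := hf.holderOnWith.mono hst

lemma mono_const (hf : HolderBoundOn M α f s) (hMN : M ≤ N) : HolderBoundOn N α f s where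
  continuousOn := hf.continuousOn
  nnnorm_le x hx := (hf.nnnorm_le x hx).trans hMN
  holderOnWith := hf.holderOnWith.mono_const hMN

lemma add (hf : HolderBoundOn M α f s) (hg : HolderBoundOn N α g s) :
    HolderBoundOn (M + N) α (fun x ↦ f x + g x) s where
  continuousOn := hf.continuousOn.add hg.continuousOn
  nnnorm_le x hx := (nnnorm_add_le _ _).trans (add_le_add (hf.nnnorm_le x hx) (hg.nnnorm_le x hx))
  holderOnWith := holderOnWith_iff_nndist_le.2 fun x hx y hy ↦ by
    rw [add_mul]
    exact (nndist_add_add_le _ _ _ _).trans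
      (add_le_add (hf.holderOnWith.nndist_le hx hy) (hg.holderOnWith.nndist_le hx hy))

lemma mul {A : Type*} [NonUnitalSeminormedRing A] {f g : X → A} (hf : HolderBoundOn M α f s)
    (hg : HolderBoundOn N α g s) : HolderBoundOn (2 * M * N) α (fun x ↦ f x * g x) s where
  continuousOn := hf.continuousOn.mul hg.continuousOn
  nnnorm_le x hx := calc
    ‖f x * g x‖₊ ≤ ‖f x‖₊ * ‖g x‖₊ := nnnorm_mul_le _ _
    _ ≤ M * N := mul_le_mul' (hf.nnnorm_le x hx) (hg.nnnorm_le x hx)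
    _ ≤ 2 * M * N := by rw [mul_assoc]; exact le_mul_of_one_le_left' one_le_two
  holderOnWith := holderOnWith_iff_nndist_le.2 fun x hx y hy ↦ calc
    nndist (f x * g x) (f y * g y) = ‖f x * (g x - g y) + (f x - f y) * g y‖₊ := by
      rw [nndist_eq_nnnorm]; congr 1; noncomm_ring
    _ ≤ ‖f x‖₊ * nndist (g x) (g y) + nndist (f x) (f y) * ‖g y‖₊ := by
      rw [nndist_eq_nnnorm, nndist_eq_nnnorm]
      exact (nnnorm_add_le _ _).trans (add_le_add (nnnorm_mul_le _ _) (nnnorm_mul_le _ _))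
    _ ≤ M * (N * nndist x y ^ (α : ℝ)) + M * nndist x y ^ (α : ℝ) * N := by
      gcongr
      exacts [hf.nnnorm_le x hx, hg.holderOnWith.nndist_le hx hy, hf.holderOnWith.nndist_le hx hy,
        hg.nnnorm_le y hy]
    _ = 2 * M * N * nndist x y ^ (α : ℝ) := by ring

lemma comp_lipschitzOnWith {f : Y → F} {t : Set Y} (hf : HolderBoundOn M α f t) {T : X → Y}
    (hT : LipschitzOnWith K T s) (hK : 1 ≤ K) (hmaps : Set.MapsTo T s t) :
    HolderBoundOn (M * K ^ (α : ℝ)) α (f ∘ T) s where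
  continuousOn := hf.continuousOn.comp hT.continuousOn hmaps
  nnnorm_le x hx := (hf.nnnorm_le _ (hmaps hx)).trans
    (le_mul_of_one_le_right' (NNReal.one_le_rpow hK α.coe_nonneg))
  holderOnWith := by
    simpa only [mul_one] using hf.holderOnWith.comp (holderOnWith_one.2 hT) hmaps

lemma of_nndist_le_one (hf : ContinuousOn f s) (hB : ∀ x ∈ s, ‖f x‖₊ ≤ B)
    (hK : ∀ x ∈ s, ∀ y ∈ s, nndist x y ≤ 1 → nndist (f x) (f y) ≤ K * nndist x y ^ (α : ℝ)) :
    HolderBoundOn (max (2 * B) K) α f s where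
  continuousOn := hf
  nnnorm_le x hx := (hB x hx).trans <|
    (le_mul_of_one_le_left' one_le_two).trans (le_max_left _ _)
  holderOnWith := holderOnWith_iff_nndist_le.2 fun x hx y hy ↦ by
    rcases le_total (nndist x y) 1 with hxy | hxy
    · exact (hK x hx y hy hxy).trans (by gcongr; exact le_max_right _ _)
    · calc
        nndist (f x) (f y) ≤ ‖f x‖₊ + ‖f y‖₊ := by
          rw [nndist_eq_nnnorm]; exact nnnorm_sub_le _ _
        _ ≤ 2 * B := by rw [two_mul]; exact add_le_add (hB x hx) (hB y hy)
        _ ≤ max (2 * B) K := le_max_left _ _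
        _ ≤ max (2 * B) K * nndist x y ^ (α : ℝ) :=
          le_mul_of_one_le_right' (NNReal.one_le_rpow hxy α.coe_nonneg)

lemma of_lipschitzOnWith (hα : α ≤ 1) (hB : ∀ x ∈ s, ‖f x‖₊ ≤ B) (hf : LipschitzOnWith K f s) :
    HolderBoundOn (max (2 * B) K) α f s := by
  refine of_nndist_le_one hf.continuousOn hB fun x hx y hy hxy ↦ ?_
  refine (lipschitzOnWith_iff_dist_le_mul.1 hf x hx y hy).trans ?_
  change K * nndist x y ≤ K * nndist x y ^ (α : ℝ)
  gcongr
  exact_mod_cast Real.self_le_rpow_of_le_one (nndist x y).coe_nonneg hxy hα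

/-- A segment from a point outside `t` to a point of `t` crosses the boundary of `t`, where `f`
vanishes already, so the zero extension costs nothing in the Hölder constant. -/
lemma of_eqOn_zero {E : Type*} [NormedAddCommGroup E] [NormedSpace ℝ E] {f : E → F} {s t : Set E}
    (hs : Convex ℝ s) (hs' : IsClosed s) (ht : IsClosed t)
    (hf : HolderBoundOn M α f (s \ interior t)) (hzero : Set.EqOn f 0 t) :
    HolderBoundOn M α f s := by
  have cross : ∀ x ∈ s, ∀ y ∈ s, x ∉ t → y ∈ t →
      nndist (f x) (f y) ≤ M * nndist x y ^ (α : ℝ) := by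
    intro x hx y hy hxt hyt
    obtain ⟨w, hw, hwt, hwi⟩ := isPreconnected_closed_iff.1 (convex_segment x y).isPreconnected
      t (interior t)ᶜ ht isOpen_interior.isClosed_compl
      (fun z _ ↦ (em (z ∈ t)).imp id fun hz hzi ↦ hz (interior_subset hzi))
      ⟨y, right_mem_segment ℝ x y, hyt⟩
      ⟨x, left_mem_segment ℝ x y, fun hxi ↦ hxt (interior_subset hxi)⟩
    have hxw : nndist x w ≤ nndist x y := by
      rw [← NNReal.coe_le_coe, coe_nndist, coe_nndist]
      linarith [dist_add_dist_of_mem_segment hw, dist_nonneg (x := w) (y := y)]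
    rw [show f y = f w from (hzero hyt).trans (hzero hwt).symm]
    exact hf.holderOnWith.nndist_le_of_le ⟨hx, fun hxi ↦ hxt (interior_subset hxi)⟩
      ⟨hs.segment_subset hx hy hw, hwi⟩ hxw
  refine ⟨?_, fun x hx ↦ ?_, holderOnWith_iff_nndist_le.2 fun x hx y hy ↦ ?_⟩
  · refine (hf.continuousOn.union_of_isClosed (continuousOn_const.congr hzero)
      (hs'.sdiff isOpen_interior) ht).mono fun x hx ↦ ?_
    exact (em (x ∈ t)).symm.imp (fun hxt ↦ ⟨hx, fun hxi ↦ hxt (interior_subset hxi)⟩) id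
  · by_cases hxt : x ∈ t
    · simp [hzero hxt]
    · exact hf.nnnorm_le x ⟨hx, fun hxi ↦ hxt (interior_subset hxi)⟩
  · by_cases hxt : x ∈ t <;> by_cases hyt : y ∈ t
    · simp [hzero hxt, hzero hyt]
    · rw [nndist_comm (f x), nndist_comm x]
      exact cross y hy x hx hyt hxt
    · exact cross x hx y hy hxt hyt
    · exact hf.holderOnWith.nndist_le ⟨hx, fun hxi ↦ hxt (interior_subset hxi)⟩
        ⟨hy, fun hyi ↦ hyt (interior_subset hyi)⟩

end HolderBoundOn

lemma lipschitzOnWith_norm_div_pow {E : Type*} [SeminormedAddCommGroup E] {R : ℝ≥0} (hR : 0 < R)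
    (k : ℕ) : LipschitzOnWith (k / R) (fun x : E ↦ (‖x‖ / R) ^ k) (closedBall 0 R) := by
  have norm_div_le : ∀ x ∈ closedBall (0 : E) R, |‖x‖ / R| ≤ 1 := fun x hx ↦ by
    rw [abs_of_nonneg (by positivity), div_le_one (by exact_mod_cast hR)]
    exact mem_closedBall_zero_iff.1 hx
  refine LipschitzOnWith.of_dist_le_mul fun x hx y hy ↦ ?_
  calc
    dist ((‖x‖ / R) ^ k) ((‖y‖ / R) ^ k)
      ≤ |‖x‖ / R - ‖y‖ / R| * k * max |‖x‖ / R| |‖y‖ / R| ^ (k - 1) := abs_pow_sub_pow_le ..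
    _ ≤ (dist x y / R) * k * 1 := by
      gcongr
      · rw [← sub_div, abs_div, abs_of_nonneg R.coe_nonneg, dist_eq_norm]
        gcongr
        exact abs_norm_sub_norm_le x y
      · exact pow_le_one₀ (by positivity) (max_le (norm_div_le x hx) (norm_div_le y hy))
    _ = (k / R : ℝ≥0) * dist x y := by push_cast; ring

lemma holderBoundOn_norm_div_pow {E : Type*} [SeminormedAddCommGroup E] {R : ℝ≥0} (hR : 0 < R)
    (hα : α ≤ 1) (k : ℕ) :
    HolderBoundOn (max 2 (k / R)) α (fun x : E ↦ (‖x‖ / R) ^ k) (closedBall 0 R) := by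
  rw [← mul_one 2]
  refine .of_lipschitzOnWith hα (fun x hx ↦ ?_) (lipschitzOnWith_norm_div_pow hR k)
  rw [nnnorm_pow]
  refine pow_le_one₀ zero_le ?_
  rw [← NNReal.coe_le_coe, coe_nnnorm, Real.norm_of_nonneg (by positivity)]
  exact div_le_one_of_le₀ (mem_closedBall_zero_iff.1 hx) R.coe_nonneg

end HolderBound

/-! ### Inversion -/

section Inversion

open EuclideanGeometry

lemma lipschitzOnWith_inversion {V P : Type*} [NormedAddCommGroup V] [InnerProductSpace ℝ V]
    [MetricSpace P] [NormedAddTorsor V P] (c : P) (R : ℝ≥0) {ρ : ℝ≥0} (hρ : 0 < ρ) :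
    LipschitzOnWith ((R / ρ) ^ 2) (inversion c R) (ball c ρ)ᶜ := by
  have hρ' : (0 : ℝ) < ρ := hρ
  refine LipschitzOnWith.of_dist_le_mul fun x hx y hy ↦ ?_
  replace hx : ρ ≤ dist x c := not_lt.1 hx
  replace hy : ρ ≤ dist y c := not_lt.1 hy
  rw [dist_inversion_inversion (dist_pos.1 (hρ'.trans_le hx)) (dist_pos.1 (hρ'.trans_le hy))]
  push_cast
  rw [div_pow, sq (ρ : ℝ)]
  gcongr

lemma HolderBoundOn.of_eqOn_inversion {V F : Type*} [NormedAddCommGroup V] [InnerProductSpace ℝ V]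
    [SeminormedAddCommGroup F] {M α R ρ : ℝ≥0} {f g : V → F} (hα : α ≤ 1) (hρ : 0 < ρ)
    (hρR : ρ ≤ R) (hf : HolderBoundOn M α f (closedBall 0 (R ^ 2 / ρ)))
    (hg : Set.EqOn g (f ∘ inversion 0 R) (ball 0 ρ)ᶜ) (hzero : Set.EqOn g 0 (closedBall 0 ρ))
    (r : ℝ) : HolderBoundOn ((R / ρ) ^ 2 * M) α g (closedBall 0 r) := by
  have hρ' : (0 : ℝ) < ρ := hρ
  have one_le : 1 ≤ (R / ρ) ^ 2 := one_le_pow₀ ((one_le_div hρ).2 hρR)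
  have hmaps : Set.MapsTo (inversion 0 R) (ball (0 : V) ρ)ᶜ (closedBall 0 (R ^ 2 / ρ)) := by
    intro x hx
    rw [mem_closedBall, dist_inversion_center]
    gcongr
    exact not_lt.1 hx
  have outside : HolderBoundOn ((R / ρ) ^ 2 * M) α g (ball 0 ρ)ᶜ := by
    refine ((hf.comp_lipschitzOnWith (lipschitzOnWith_inversion 0 R hρ) one_le hmaps).congr
      hg).mono_const ?_
    rw [mul_comm]
    gcongr
    exact (NNReal.rpow_le_rpow_of_exponent_le one_le hα).trans_eq (NNReal.rpow_one _)
  refine .of_eqOn_zero (convex_closedBall 0 r) isClosed_closedBall isClosed_closedBall ?_ hzero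
  rw [interior_closedBall 0 hρ'.ne']
  exact outside.mono (Set.sdiff_subset_compl _ _)

end Inversion

/-! ### Axially symmetric functions in different dimensions -/

section Axial

open EuclideanGeometry

variable {m n : ℕ}

/-- The orthogonal projection onto the hyperplane `ξₙ = 0`, whose norm is the distance
`√(ξ₁² + ⋯ + ξ_{n-1}²)` to the axis of symmetry. -/
def horizontal (n : ℕ) : EuclideanSpace ℝ (Fin n) →ₗ[ℝ] EuclideanSpace ℝ (Fin n) where
  toFun ξ := WithLp.toLp 2 fun i ↦ if (i : ℕ) < n - 1 then ξ i else 0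
  map_add' ξ η := by ext i; simp [ite_add_ite]
  map_smul' c ξ := by ext i; simp

/-- The last coordinate `ξₙ`, written as a sum so that it makes sense for every `n`. -/
def height (n : ℕ) : EuclideanSpace ℝ (Fin n) →ₗ[ℝ] ℝ where
  toFun ξ := ∑ i : Fin n, if (i : ℕ) = n - 1 then ξ i else 0
  map_add' ξ η := by simp [← Finset.sum_add_distrib, ite_add_ite]
  map_smul' c ξ := by simp [Finset.mul_sum]

/-- The embedding of the plane of the coordinates `(ϖ, z)` into `ℝᵐ`, along the first and the last
basis vector. -/
def meridian (m : ℕ) : ℝ × ℝ →ₗ[ℝ] EuclideanSpace ℝ (Fin m) where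
  toFun p := WithLp.toLp 2 fun i ↦ if (i : ℕ) = 0 then p.1 else if (i : ℕ) = m - 1 then p.2 else 0
  map_add' p q := by ext i; simp [ite_add_ite]
  map_smul' c p := by ext i; simp

/-- The map `ℝⁿ → ℝᵐ` which preserves the distance to the axis and the height, and has its values
in a meridian plane; it pulls the lift of a function to `ℝᵐ` back to its lift to `ℝⁿ`. -/
def axialTransfer (n m : ℕ) (ξ : EuclideanSpace ℝ (Fin n)) : EuclideanSpace ℝ (Fin m) :=
  meridian m (‖horizontal n ξ‖, height n ξ)

lemma flat_eq (n : ℕ) (a : ℝ) (Q : ℝ × ℝ → ℝ) (ξ : EuclideanSpace ℝ (Fin n)) :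
    flat n a Q ξ = Q (a * ‖horizontal n ξ‖, a * height n ξ) := by
  simp [flat, horizontal, height, EuclideanSpace.norm_eq, ite_pow]

lemma sq_norm_horizontal_add_sq_height (ξ : EuclideanSpace ℝ (Fin n)) :
    ‖horizontal n ξ‖ ^ 2 + height n ξ ^ 2 = ‖ξ‖ ^ 2 := by
  cases n with
  | zero => simp [Subsingleton.elim ξ 0]
  | succ k =>
    simp [EuclideanSpace.norm_sq_eq, horizontal, height, Fin.sum_univ_castSucc, (Fin.is_lt _).ne]

lemma norm_horizontal_meridian (hm : 2 ≤ m) (p : ℝ × ℝ) :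
    ‖horizontal m (meridian m p)‖ = |p.1| := by
  obtain ⟨k, rfl⟩ := Nat.exists_eq_add_of_le' hm
  have : horizontal (k + 2) (meridian (k + 2) p) = EuclideanSpace.single 0 p.1 := by
    ext i
    cases i using Fin.cases with
    | zero => simp [horizontal, meridian]
    | succ j => simpa [horizontal, meridian] using fun h h' ↦ absurd h' h.ne
  rw [this, PiLp.norm_single, Real.norm_eq_abs]

lemma height_meridian (hm : 2 ≤ m) (p : ℝ × ℝ) : height m (meridian m p) = p.2 := by
  obtain ⟨k, rfl⟩ := Nat.exists_eq_add_of_le' hm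
  simp [height, meridian, Fin.sum_univ_castSucc, (Fin.is_lt _).ne]

lemma norm_horizontal_axialTransfer (hm : 2 ≤ m) (ξ : EuclideanSpace ℝ (Fin n)) :
    ‖horizontal m (axialTransfer n m ξ)‖ = ‖horizontal n ξ‖ := by
  rw [axialTransfer, norm_horizontal_meridian hm, abs_norm]

lemma height_axialTransfer (hm : 2 ≤ m) (ξ : EuclideanSpace ℝ (Fin n)) :
    height m (axialTransfer n m ξ) = height n ξ :=
  height_meridian hm _

lemma sq_norm_meridian (hm : 2 ≤ m) (p : ℝ × ℝ) : ‖meridian m p‖ ^ 2 = p.1 ^ 2 + p.2 ^ 2 := by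
  rw [← sq_norm_horizontal_add_sq_height, norm_horizontal_meridian hm, height_meridian hm, sq_abs]

lemma norm_axialTransfer (hm : 2 ≤ m) (ξ : EuclideanSpace ℝ (Fin n)) :
    ‖axialTransfer n m ξ‖ = ‖ξ‖ := by
  rw [← sq_eq_sq₀ (norm_nonneg _) (norm_nonneg _), axialTransfer, sq_norm_meridian hm,
    sq_norm_horizontal_add_sq_height]

lemma lipschitzWith_axialTransfer (hm : 2 ≤ m) : LipschitzWith 1 (axialTransfer n m) := by
  refine LipschitzWith.mk_one fun ξ η ↦ ?_
  rw [dist_eq_norm, dist_eq_norm, ← sq_le_sq₀ (norm_nonneg _) (norm_nonneg _), axialTransfer,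
    axialTransfer, ← map_sub, sq_norm_meridian hm, ← sq_norm_horizontal_add_sq_height, Prod.fst_sub,
    Prod.snd_sub, ← map_sub (height n)]
  gcongr ?_ + _
  rw [sq_le_sq, abs_norm, map_sub]
  exact abs_norm_sub_norm_le _ _

lemma axialTransfer_smul {c : ℝ} (hc : 0 ≤ c) (ξ : EuclideanSpace ℝ (Fin n)) :
    axialTransfer n m (c • ξ) = c • axialTransfer n m ξ := by
  rw [axialTransfer, axialTransfer, ← map_smul, map_smul, map_smul, norm_smul, norm_of_nonneg hc,
    Prod.smul_mk, smul_eq_mul, smul_eq_mul]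

lemma kelvinPt_axialTransfer (hm : 2 ≤ m) (Ξ₀ : ℝ) (ξ : EuclideanSpace ℝ (Fin n)) :
    kelvinPt m Ξ₀ (axialTransfer n m ξ) = axialTransfer n m (kelvinPt n Ξ₀ ξ) := by
  rw [kelvinPt, kelvinPt, norm_axialTransfer hm, axialTransfer_smul (sq_nonneg _)]

lemma flat_axialTransfer (hm : 2 ≤ m) (a : ℝ) (Q : ℝ × ℝ → ℝ) (ξ : EuclideanSpace ℝ (Fin n)) :
    flat m a Q (axialTransfer n m ξ) = flat n a Q ξ := by
  rw [flat_eq, flat_eq, norm_horizontal_axialTransfer hm, height_axialTransfer hm]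

lemma HolderBoundOn.comp_axialTransfer {F : Type*} [SeminormedAddCommGroup F] {M α : ℝ≥0} {R : ℝ}
    {f : EuclideanSpace ℝ (Fin m) → F} (hm : 2 ≤ m)
    (hf : HolderBoundOn M α f (closedBall 0 R)) (n : ℕ) :
    HolderBoundOn M α (f ∘ axialTransfer n m) (closedBall 0 R) := by
  simpa using hf.comp_lipschitzOnWith (lipschitzWith_axialTransfer hm).lipschitzOnWith le_rfl
    fun ξ hξ ↦ by simpa only [mem_closedBall_zero_iff, norm_axialTransfer hm] using hξ

lemma rr_mul_horizontal_height {a : ℝ} (ha : 0 ≤ a) (ξ : EuclideanSpace ℝ (Fin n)) :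
    rr (a * ‖horizontal n ξ‖, a * height n ξ) = a * ‖ξ‖ := by
  rw [rr, mul_pow, mul_pow, ← mul_add, sq_norm_horizontal_add_sq_height, ← mul_pow,
    sqrt_sq (by positivity)]

lemma flat_cut0 {a : ℝ} (ha : 0 < a) (Ξ₀ : ℝ) (χ : ℝ → ℝ) (Q : ℝ × ℝ → ℝ)
    (ξ : EuclideanSpace ℝ (Fin n)) :
    flat n a (cut0 χ (a * Ξ₀) Q) ξ = χ (‖ξ‖ / Ξ₀) * flat n a Q ξ := by
  rw [flat_eq, flat_eq, cut0, rr_mul_horizontal_height ha.le, mul_div_mul_left _ _ ha.ne']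

lemma flat_cutInf {a : ℝ} (ha : 0 < a) (Ξ₀ : ℝ) (χ : ℝ → ℝ) (Q : ℝ × ℝ → ℝ)
    (ξ : EuclideanSpace ℝ (Fin n)) :
    flat n a (cutInf χ (a * Ξ₀) Q) ξ = (1 - χ (‖ξ‖ / Ξ₀)) * flat n a Q ξ := by
  rw [flat_eq, flat_eq, cutInf, rr_mul_horizontal_height ha.le, mul_div_mul_left _ _ ha.ne']

lemma kelvinPt_eq_inversion (n : ℕ) (Ξ₀ : ℝ) : kelvinPt n Ξ₀ = inversion 0 Ξ₀ := by
  ext1 ξ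
  simp [kelvinPt, inversion]

end Axial

/-! ### The product estimate for Hölder bounds -/

section Product

open EuclideanGeometry

/-- The bound `M` for the two parts of the norm of `𝔠^{0,α}_{(n)}`, except that the Hölder
condition is imposed at all distances; `α = 0` stands for `𝔠⁰_{(n)}`. -/
structure ChunkBound (n : ℕ) (α : ℝ≥0) (a Ξ₀ : ℝ) (χ : ℝ → ℝ) (Q : ℝ × ℝ → ℝ) (M : ℝ≥0) :
    Prop where
  near : HolderBoundOn M α (flat n a (cut0 χ (a * Ξ₀) Q)) (cb n (2 * Ξ₀))
  far : ∃ h, HolderBoundOn M α h (cb n Ξ₀) ∧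
    Set.EqOn h (kelvin n Ξ₀ (flat n a (cutInf χ (a * Ξ₀) Q))) (cb n Ξ₀ \ {0})

/-- The price for passing from the bounds of `ChunkBound` to bounds for the uncut lift of `Q`: the
first summand comes from the inversion on the complement of `B(Ξ₀/2)`, the second one from
the Kelvin factor `(|ξ|/Ξ₀)^(m-2)`. -/
def uncutConst (m : ℕ) (Ξ₀ : ℝ≥0) : ℝ≥0 := 4 + 2 * max 2 ((m - 2 : ℕ) / Ξ₀)

lemma flat_cut0_add_flat_cutInf (n : ℕ) (a R : ℝ) (χ : ℝ → ℝ) (Q : ℝ × ℝ → ℝ)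
    (ξ : EuclideanSpace ℝ (Fin n)) :
    flat n a (cut0 χ R Q) ξ + flat n a (cutInf χ R Q) ξ = flat n a Q ξ := by
  simp only [flat, cut0, cutInf]
  ring

lemma kelvinPt_kelvinPt (n : ℕ) {Ξ₀ : ℝ} (hΞ₀ : Ξ₀ ≠ 0) (ξ : EuclideanSpace ℝ (Fin n)) :
    kelvinPt n Ξ₀ (kelvinPt n Ξ₀ ξ) = ξ := by
  rw [kelvinPt_eq_inversion, inversion_inversion _ hΞ₀]

lemma norm_kelvinPt (n : ℕ) (Ξ₀ : ℝ) (ξ : EuclideanSpace ℝ (Fin n)) :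
    ‖kelvinPt n Ξ₀ ξ‖ = Ξ₀ ^ 2 / ‖ξ‖ := by
  rw [kelvinPt_eq_inversion, ← dist_zero_right, dist_inversion_center, dist_zero_right]

lemma norm_div_pow_mul_kelvin {n : ℕ} {Ξ₀ : ℝ} (hΞ₀ : Ξ₀ ≠ 0) (f : EuclideanSpace ℝ (Fin n) → ℝ)
    {ξ : EuclideanSpace ℝ (Fin n)} (hξ : ξ ≠ 0) :
    (‖ξ‖ / Ξ₀) ^ (n - 2) * kelvin n Ξ₀ f ξ = f (kelvinPt n Ξ₀ ξ) := by
  rw [kelvin, ← mul_assoc, ← mul_pow, div_mul_div_cancel₀ hΞ₀, div_self (norm_ne_zero_iff.2 hξ),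
    one_pow, one_mul]

namespace ChunkBound

variable {m n : ℕ} {α Ξ₀ M M₁ M₂ : ℝ≥0} {a : ℝ} {χ : ℝ → ℝ} {Q Q₁ Q₂ : ℝ × ℝ → ℝ}

lemma exists_eqOn_flat_cutInf_kelvinPt (hQ : ChunkBound m α a Ξ₀ χ Q M) (hα : α ≤ 1)
    (hΞ₀ : 0 < Ξ₀) :
    ∃ w, HolderBoundOn (2 * max 2 ((m - 2 : ℕ) / Ξ₀) * M) α w (cb m Ξ₀) ∧
      Set.EqOn w (flat m a (cutInf χ (a * Ξ₀) Q) ∘ kelvinPt m Ξ₀) (cb m Ξ₀ \ {0}) := by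
  obtain ⟨h, hh, heq⟩ := hQ.far
  refine ⟨_, (holderBoundOn_norm_div_pow hΞ₀ hα (m - 2)).mul hh, fun ξ hξ ↦ ?_⟩
  rw [heq hξ]
  exact norm_div_pow_mul_kelvin (NNReal.coe_ne_zero.2 hΞ₀.ne') _ hξ.2

/-- On `Ξ₀ ≤ |ξ|` the far part of `Q` is read off from its Kelvin transform. -/
lemma holderBoundOn_flat_cutInf (hQ : ChunkBound m α a Ξ₀ χ Q M) (hα : α ≤ 1) (ha : 0 < a)
    (hΞ₀ : 0 < Ξ₀) (hχ : ∀ t ≤ 1, χ t = 1) :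
    HolderBoundOn (2 * max 2 ((m - 2 : ℕ) / Ξ₀) * M) α (flat m a (cutInf χ (a * Ξ₀) Q))
      (cb m (2 * Ξ₀)) := by
  have hΞ₀' : (0 : ℝ) < Ξ₀ := hΞ₀
  obtain ⟨w, hw, hw_eq⟩ := hQ.exists_eqOn_flat_cutInf_kelvinPt hα hΞ₀
  have eq_inversion : Set.EqOn (flat m a (cutInf χ (a * Ξ₀) Q)) (w ∘ inversion 0 Ξ₀)
      (ball 0 Ξ₀)ᶜ := by
    intro ξ hξ
    have hξ_le : Ξ₀ ≤ ‖ξ‖ := by simpa using hξ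
    have hξ_mem : kelvinPt m Ξ₀ ξ ∈ cb m Ξ₀ \ {0} := by
      have hξ_pos : 0 < ‖ξ‖ := hΞ₀'.trans_le hξ_le
      refine ⟨?_, norm_pos_iff.1 (by rw [norm_kelvinPt]; positivity)⟩
      rw [cb, mem_closedBall_zero_iff, norm_kelvinPt, div_le_iff₀ hξ_pos, sq]
      gcongr
    rw [Function.comp_apply, ← kelvinPt_eq_inversion, hw_eq hξ_mem, Function.comp_apply,
      kelvinPt_kelvinPt _ hΞ₀'.ne']
  have eq_zero : Set.EqOn (flat m a (cutInf χ (a * Ξ₀) Q)) 0 (closedBall 0 Ξ₀) := by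
    intro ξ hξ
    rw [flat_cutInf ha, hχ _ (div_le_one_of_le₀ (mem_closedBall_zero_iff.1 hξ) hΞ₀'.le), sub_self,
      zero_mul, Pi.zero_apply]
  have hw' : HolderBoundOn (2 * max 2 ((m - 2 : ℕ) / Ξ₀) * M) α w
      (closedBall 0 (Ξ₀ ^ 2 / Ξ₀)) := by
    rwa [sq, mul_self_div_self]
  refine (HolderBoundOn.of_eqOn_inversion hα hΞ₀ le_rfl hw' eq_inversion eq_zero _).mono_const ?_
  rw [div_self hΞ₀.ne', one_pow, one_mul]

/-- The value at the origin is `0` because `χ` vanishes near infinity. -/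
lemma exists_eqOn_flat_cut0_kelvinPt (hQ : ChunkBound m α a Ξ₀ χ Q M) (hα : α ≤ 1) (ha : 0 < a)
    (hΞ₀ : 0 < Ξ₀) (hχ : ∀ t, 2 ≤ t → χ t = 0) :
    ∃ u, HolderBoundOn (4 * M) α u (cb m Ξ₀) ∧
      Set.EqOn u (flat m a (cut0 χ (a * Ξ₀) Q) ∘ kelvinPt m Ξ₀) (cb m Ξ₀ \ {0}) := by
  have hΞ₀' : (0 : ℝ) < Ξ₀ := hΞ₀
  set u := Function.update (flat m a (cut0 χ (a * Ξ₀) Q) ∘ kelvinPt m Ξ₀) 0 0 with hu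
  have eq_inversion : Set.EqOn u (flat m a (cut0 χ (a * Ξ₀) Q) ∘ inversion 0 Ξ₀)
      (ball 0 (Ξ₀ / 2 : ℝ≥0))ᶜ := by
    intro ξ hξ
    rw [← kelvinPt_eq_inversion, hu, Function.update_of_ne]
    rintro rfl
    exact hξ (mem_ball_self (half_pos hΞ₀))
  have eq_zero : Set.EqOn u 0 (closedBall 0 (Ξ₀ / 2 : ℝ≥0)) := by
    intro ξ hξ
    obtain rfl | hξ₀ := eq_or_ne ξ 0
    · exact Function.update_self ..
    have hξ_le : ‖ξ‖ ≤ Ξ₀ / 2 := by simpa using hξ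
    have two_le : 2 ≤ ‖kelvinPt m Ξ₀ ξ‖ / Ξ₀ := by
      rw [norm_kelvinPt, le_div_iff₀ hΞ₀', le_div_iff₀ (norm_pos_iff.2 hξ₀)]
      nlinarith
    rw [hu, Function.update_of_ne hξ₀, Function.comp_apply, flat_cut0 ha, hχ _ two_le, zero_mul,
      Pi.zero_apply]
  have hnear : HolderBoundOn M α (flat m a (cut0 χ (a * Ξ₀) Q))
      (closedBall 0 (Ξ₀ ^ 2 / (Ξ₀ / 2 : ℝ≥0))) := by
    rw [show (Ξ₀ : ℝ) ^ 2 / (Ξ₀ / 2 : ℝ≥0) = 2 * Ξ₀ by push_cast; field]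
    exact hQ.near
  refine ⟨u, (HolderBoundOn.of_eqOn_inversion hα (half_pos hΞ₀) (half_le_self hΞ₀.le) hnear
    eq_inversion eq_zero _).mono_const ?_, fun ξ hξ ↦ Function.update_of_ne hξ.2 _ _⟩
  rw [div_div_cancel₀ hΞ₀.ne']
  norm_num

lemma holderBoundOn_flat (hQ : ChunkBound m α a Ξ₀ χ Q M) (hα : α ≤ 1) (ha : 0 < a)
    (hΞ₀ : 0 < Ξ₀) (hχ : ∀ t ≤ 1, χ t = 1) :
    HolderBoundOn (uncutConst m Ξ₀ * M) α (flat m a Q) (cb m (2 * Ξ₀)) := by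
  refine ((hQ.near.add (hQ.holderBoundOn_flat_cutInf hα ha hΞ₀ hχ)).congr
    fun ξ _ ↦ (flat_cut0_add_flat_cutInf ..).symm).mono_const ?_
  rw [uncutConst, add_mul]
  gcongr
  exact le_mul_of_one_le_left' (by norm_num)

lemma exists_eqOn_flat_kelvinPt (hQ : ChunkBound m α a Ξ₀ χ Q M) (hα : α ≤ 1) (ha : 0 < a)
    (hΞ₀ : 0 < Ξ₀) (hχ : ∀ t, 2 ≤ t → χ t = 0) :
    ∃ g, HolderBoundOn (uncutConst m Ξ₀ * M) α g (cb m Ξ₀) ∧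
      Set.EqOn g (flat m a Q ∘ kelvinPt m Ξ₀) (cb m Ξ₀ \ {0}) := by
  obtain ⟨u, hu, hu_eq⟩ := hQ.exists_eqOn_flat_cut0_kelvinPt hα ha hΞ₀ hχ
  obtain ⟨w, hw, hw_eq⟩ := hQ.exists_eqOn_flat_cutInf_kelvinPt hα hΞ₀
  refine ⟨_, add_mul (4 : ℝ≥0) _ M ▸ hu.add hw, fun ξ hξ ↦ ?_⟩
  rw [hu_eq hξ, hw_eq hξ]
  exact flat_cut0_add_flat_cutInf ..

lemma mul (hm : 2 ≤ m) (hα : α ≤ 1) (ha : 0 < a) (hΞ₀ : 0 < Ξ₀) (hχ₁ : ∀ t ≤ 1, χ t = 1)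
    (hχ₀ : ∀ t, 2 ≤ t → χ t = 0) (h₁ : ChunkBound m α a Ξ₀ χ Q₁ M₁)
    (h₂ : ChunkBound n α a Ξ₀ χ Q₂ M₂) :
    ChunkBound n α a Ξ₀ χ (fun p ↦ Q₁ p * Q₂ p) (2 * (uncutConst m Ξ₀ * M₁) * M₂) where
  near := by
    refine (((h₁.holderBoundOn_flat hα ha hΞ₀ hχ₁).comp_axialTransfer hm n).mul h₂.near).congr
      fun ξ _ ↦ ?_
    simp only [Function.comp_apply, flat_axialTransfer hm]
    exact mul_left_comm ..
  far := by
    obtain ⟨g, hg, hg_eq⟩ := h₁.exists_eqOn_flat_kelvinPt hα ha hΞ₀ hχ₀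
    obtain ⟨h, hh, hh_eq⟩ := h₂.far
    refine ⟨_, (hg.comp_axialTransfer hm n).mul hh, fun ξ hξ ↦ ?_⟩
    have hTξ : axialTransfer n m ξ ∈ cb m Ξ₀ \ {0} := by
      refine ⟨?_, norm_ne_zero_iff.1 ?_⟩
      · simpa only [cb, mem_closedBall_zero_iff, norm_axialTransfer hm] using hξ.1
      · simpa only [norm_axialTransfer hm] using norm_ne_zero_iff.2 hξ.2
    rw [Function.comp_apply, hg_eq hTξ, hh_eq hξ, Function.comp_apply, kelvinPt_axialTransfer hm,
      flat_axialTransfer hm]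
    simp only [kelvin, flat, cutInf]
    ring

end ChunkBound

end Product

/-! ### The norms of order zero -/

section Norms

variable {n : ℕ} {α M N : ℝ≥0} {f g : EuclideanSpace ℝ (Fin n) → ℝ}
  {s : Set (EuclideanSpace ℝ (Fin n))}

lemma cNormE_zero_le_iff : cNormE n 0 f s ≤ M ↔ ∀ x ∈ s, ‖f x‖₊ ≤ M := by
  have nnnorm_eq (x) : ‖iteratedFDerivWithin ℝ 0 f s x‖₊ = ‖f x‖₊ :=
    NNReal.eq norm_iteratedFDerivWithin_zero
  simp [cNormE, nnnorm_eq]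

lemma holderSemiE_zero_le_iff :
    holderSemiE n 0 α f s ≤ M ↔
      ∀ x ∈ s, ∀ y ∈ s, nndist x y ≤ 1 → nndist (f x) (f y) ≤ M * nndist x y ^ (α : ℝ) := by
  have nnnorm_eq (x y) :
      ‖iteratedFDerivWithin ℝ 0 f s x - iteratedFDerivWithin ℝ 0 f s y‖₊ = nndist (f x) (f y) := by
    rw [iteratedFDerivWithin_zero_eq_comp, Function.comp_apply, Function.comp_apply, ← map_sub,
      LinearIsometryEquiv.nnnorm_map, nndist_eq_nnnorm]
  have ofReal_eq (x y : EuclideanSpace ℝ (Fin n)) :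
      ENNReal.ofReal (dist x y ^ (α : ℝ)) = (nndist x y ^ (α : ℝ) : ℝ≥0) := by
    rw [← coe_nndist, ← NNReal.coe_rpow, ENNReal.ofReal_coe_nnreal]
  simp only [holderSemiE, iSup_le_iff, nnnorm_eq, ofReal_eq]
  refine forall₂_congr fun x _ ↦ forall₂_congr fun y _ ↦ ?_
  obtain rfl | hxy := eq_or_ne x y
  · simp
  have rpow_ne_zero : nndist x y ^ (α : ℝ) ≠ 0 := by simp [NNReal.rpow_eq_zero_iff, hxy]
  rw [ENNReal.div_le_iff (by exact_mod_cast rpow_ne_zero) coe_ne_top]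
  norm_cast
  exact ⟨fun h hd ↦ h ⟨hxy, hd⟩, fun h hd ↦ h hd.2⟩

lemma cNormE_congr (l : ℕ) (h : Set.EqOn f g s) : cNormE n l f s = cNormE n l g s := by
  unfold cNormE
  congr! 7 with i _ x hx
  exact congrArg _ (iteratedFDerivWithin_congr h hx i)

lemma hNormE_congr (l : ℕ) (α : ℝ) (h : Set.EqOn f g s) :
    hNormE n l α f s = hNormE n l α g s := by
  rw [hNormE, hNormE, cNormE_congr l h]
  unfold holderSemiE
  congr! 10 with x hx y hy
  rw [iteratedFDerivWithin_congr h hx, iteratedFDerivWithin_congr h hy]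

lemma memC_zero : MemC n 0 f s ↔ ContinuousOn f s := contDiffOn_zero

lemma cNormE_zero_ne_top (hs : IsCompact s) (hf : MemC n 0 f s) : cNormE n 0 f s ≠ ⊤ := by
  obtain ⟨C, hC⟩ := hs.exists_bound_of_continuousOn (memC_zero.1 hf)
  refine ne_top_of_le_ne_top coe_ne_top (cNormE_zero_le_iff (M := C.toNNReal).2 fun x hx ↦ ?_)
  exact NNReal.coe_le_coe.1 ((hC x hx).trans (le_coe_toNNReal C))

lemma hNormE_zero_ne_top {α : ℝ} (hs : IsCompact s) (hf : MemCHolder n 0 α f s) :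
    hNormE n 0 α f s ≠ ⊤ :=
  add_ne_top.2 ⟨cNormE_zero_ne_top hs hf.1, hf.2.ne⟩

namespace HolderBoundOn

lemma of_cNormE_le (hf : MemC n 0 f s) (hN : cNormE n 0 f s ≤ N) :
    HolderBoundOn (2 * N) 0 f s := by
  have nnnorm_le := cNormE_zero_le_iff.1 hN
  refine (of_nndist_le_one (K := 2 * N) (memC_zero.1 hf) nnnorm_le
    fun x hx y hy _ ↦ ?_).mono_const (max_self _).le
  rw [nndist_eq_nnnorm, NNReal.coe_zero, NNReal.rpow_zero, mul_one, two_mul]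
  exact (nnnorm_sub_le _ _).trans (add_le_add (nnnorm_le x hx) (nnnorm_le y hy))

lemma of_hNormE_le (hf : MemCHolder n 0 α f s) (hN : hNormE n 0 α f s ≤ N) :
    HolderBoundOn (2 * N) α f s := by
  refine (of_nndist_le_one (memC_zero.1 hf.1)
    (cNormE_zero_le_iff.1 (le_self_add.trans hN))
    (holderSemiE_zero_le_iff.1 (le_add_self.trans hN))).mono_const ?_
  exact max_le le_rfl (le_mul_of_one_le_left' one_le_two)

lemma memC (hf : HolderBoundOn M α f s) : MemC n 0 f s := memC_zero.2 hf.continuousOn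

lemma cNormE_le (hf : HolderBoundOn M α f s) : cNormE n 0 f s ≤ M :=
  cNormE_zero_le_iff.2 hf.nnnorm_le

lemma holderSemiE_le (hf : HolderBoundOn M α f s) : holderSemiE n 0 α f s ≤ M :=
  holderSemiE_zero_le_iff.2 fun _ hx _ hy _ ↦ hf.holderOnWith.nndist_le hx hy

lemma memCHolder (hf : HolderBoundOn M α f s) : MemCHolder n 0 α f s :=
  ⟨hf.memC, hf.holderSemiE_le.trans_lt coe_lt_top⟩

lemma hNormE_le (hf : HolderBoundOn M α f s) : hNormE n 0 α f s ≤ (2 * M : ℝ≥0) := by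
  rw [two_mul, coe_add]
  exact add_le_add hf.cNormE_le hf.holderSemiE_le

end HolderBoundOn

end Norms

/-! ### The weighted spaces of order zero -/

section Chunk

variable {m n : ℕ} {α M N Ξ₀ : ℝ≥0} {a : ℝ} {χ : ℝ → ℝ} {Q Q₁ Q₂ : ℝ × ℝ → ℝ}

lemma eqOn_closedBall_of_eqOn_diff_singleton {E Y : Type*} [NormedAddCommGroup E]
    [NormedSpace ℝ E] [Nontrivial E] [TopologicalSpace Y] [T2Space Y] {c x : E} {R : ℝ}
    (hR : R ≠ 0) {f g : E → Y} (hf : ContinuousOn f (closedBall c R))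
    (hg : ContinuousOn g (closedBall c R)) (hfg : Set.EqOn f g (closedBall c R \ {x})) :
    Set.EqOn f g (closedBall c R) := by
  refine hfg.of_subset_closure hf hg Set.sdiff_subset ?_
  calc
    closedBall c R = closure (ball c R) := (closure_ball c hR).symm
    _ ⊆ closure (ball c R ∩ {x}ᶜ) := closure_minimal
      ((dense_compl_singleton x).open_subset_closure_inter isOpen_ball) isClosed_closure
    _ ⊆ closure (closedBall c R \ {x}) := closure_mono (Set.inter_subset_inter_left _
      ball_subset_closedBall)

lemma MemChunk.chunkNormE_ne_top (hQ : MemChunk n 0 a Ξ₀ χ Q) : chunkNormE n 0 a Ξ₀ χ Q ≠ ⊤ := by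
  obtain ⟨hnear, h, hh⟩ := hQ
  exact max_ne_top (cNormE_zero_ne_top (isCompact_closedBall ..) hnear)
    (ne_top_of_le_ne_top (cNormE_zero_ne_top (isCompact_closedBall ..) hh.1) (iInf₂_le h hh))

lemma MemChunkH.chunkNormHE_ne_top {α : ℝ} (hQ : MemChunkH n 0 α a Ξ₀ χ Q) :
    chunkNormHE n 0 α a Ξ₀ χ Q ≠ ⊤ := by
  obtain ⟨hnear, h, hh⟩ := hQ
  exact max_ne_top (hNormE_zero_ne_top (isCompact_closedBall ..) hnear)
    (ne_top_of_le_ne_top (hNormE_zero_ne_top (isCompact_closedBall ..) hh.1) (iInf₂_le h hh))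

/-- By continuity the extension to the origin is unique, so the infimum in `chunkNormE` is
attained by every extension. -/
lemma MemChunk.chunkBound [NeZero n] (hΞ₀ : 0 < Ξ₀) (hQ : MemChunk n 0 a Ξ₀ χ Q)
    (hN : chunkNormE n 0 a Ξ₀ χ Q ≤ N) : ChunkBound n 0 a Ξ₀ χ Q (2 * N) := by
  obtain ⟨hnear, h, hh, h_eq⟩ := hQ
  refine ⟨.of_cNormE_le hnear ((le_max_left ..).trans hN), h, .of_cNormE_le hh ?_, h_eq⟩
  refine (le_iInf₂ fun g hg ↦ ?_).trans ((le_max_right ..).trans hN)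
  exact (cNormE_congr 0 (eqOn_closedBall_of_eqOn_diff_singleton (NNReal.coe_ne_zero.2 hΞ₀.ne')
    (memC_zero.1 hh)
    (memC_zero.1 hg.1) (h_eq.trans hg.2.symm))).le

lemma MemChunkH.chunkBound [NeZero n] (hΞ₀ : 0 < Ξ₀) (hQ : MemChunkH n 0 α a Ξ₀ χ Q)
    (hN : chunkNormHE n 0 α a Ξ₀ χ Q ≤ N) : ChunkBound n α a Ξ₀ χ Q (2 * N) := by
  obtain ⟨hnear, h, hh, h_eq⟩ := hQ
  refine ⟨.of_hNormE_le hnear ((le_max_left ..).trans hN), h, .of_hNormE_le hh ?_, h_eq⟩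
  refine (le_iInf₂ fun g hg ↦ ?_).trans ((le_max_right ..).trans hN)
  exact (hNormE_congr 0 α (eqOn_closedBall_of_eqOn_diff_singleton (NNReal.coe_ne_zero.2 hΞ₀.ne')
    (memC_zero.1 hh.1)
    (memC_zero.1 hg.1.1) (h_eq.trans hg.2.symm))).le

namespace ChunkBound

lemma memChunk (hQ : ChunkBound n α a Ξ₀ χ Q M) : MemChunk n 0 a Ξ₀ χ Q :=
  ⟨hQ.near.memC, hQ.far.imp fun _ ↦ And.imp_left HolderBoundOn.memC⟩

lemma chunkNormE_le (hQ : ChunkBound n α a Ξ₀ χ Q M) : chunkNormE n 0 a Ξ₀ χ Q ≤ M := by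
  obtain ⟨h, hh, h_eq⟩ := hQ.far
  exact max_le hQ.near.cNormE_le ((iInf₂_le h ⟨hh.memC, h_eq⟩).trans hh.cNormE_le)

lemma memChunkH (hQ : ChunkBound n α a Ξ₀ χ Q M) : MemChunkH n 0 α a Ξ₀ χ Q :=
  ⟨hQ.near.memCHolder, hQ.far.imp fun _ ↦ And.imp_left HolderBoundOn.memCHolder⟩

lemma chunkNormHE_le (hQ : ChunkBound n α a Ξ₀ χ Q M) :
    chunkNormHE n 0 α a Ξ₀ χ Q ≤ (2 * M : ℝ≥0) := by
  obtain ⟨h, hh, h_eq⟩ := hQ.far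
  exact max_le hQ.near.hNormE_le ((iInf₂_le h ⟨hh.memCHolder, h_eq⟩).trans hh.hNormE_le)

end ChunkBound

lemma MemChunk.mul [NeZero n] (hm : 2 ≤ m) (hΞ₀ : 0 < Ξ₀) (hχ₁ : ∀ t ≤ 1, χ t = 1)
    (hχ₀ : ∀ t, 2 ≤ t → χ t = 0) (ha : 0 < a) (h₁ : MemChunk m 0 a Ξ₀ χ Q₁)
    (h₂ : MemChunk n 0 a Ξ₀ χ Q₂) :
    MemChunk n 0 a Ξ₀ χ (fun p ↦ Q₁ p * Q₂ p) ∧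
      chunkNormE n 0 a Ξ₀ χ (fun p ↦ Q₁ p * Q₂ p)
        ≤ (16 * uncutConst m Ξ₀ : ℝ≥0) * chunkNormE m 0 a Ξ₀ χ Q₁ * chunkNormE n 0 a Ξ₀ χ Q₂ := by
  have : NeZero m := ⟨by lia⟩
  lift chunkNormE m 0 a Ξ₀ χ Q₁ to ℝ≥0 using h₁.chunkNormE_ne_top with N₁ hN₁
  lift chunkNormE n 0 a Ξ₀ χ Q₂ to ℝ≥0 using h₂.chunkNormE_ne_top with N₂ hN₂
  have h := (h₁.chunkBound hΞ₀ hN₁.ge).mul hm zero_le ha hΞ₀ hχ₁ hχ₀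
    (h₂.chunkBound hΞ₀ hN₂.ge)
  refine ⟨h.memChunk, h.chunkNormE_le.trans ?_⟩
  norm_cast
  calc
    _ = 8 * uncutConst m Ξ₀ * N₁ * N₂ := by ring
    _ ≤ 16 * uncutConst m Ξ₀ * N₁ * N₂ := by gcongr; norm_num

lemma MemChunkH.mul [NeZero n] (hm : 2 ≤ m) (hα : α ≤ 1) (hΞ₀ : 0 < Ξ₀)
    (hχ₁ : ∀ t ≤ 1, χ t = 1) (hχ₀ : ∀ t, 2 ≤ t → χ t = 0) (ha : 0 < a)
    (h₁ : MemChunkH m 0 α a Ξ₀ χ Q₁) (h₂ : MemChunkH n 0 α a Ξ₀ χ Q₂) :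
    MemChunkH n 0 α a Ξ₀ χ (fun p ↦ Q₁ p * Q₂ p) ∧
      chunkNormHE n 0 α a Ξ₀ χ (fun p ↦ Q₁ p * Q₂ p)
        ≤ (16 * uncutConst m Ξ₀ : ℝ≥0) * chunkNormHE m 0 α a Ξ₀ χ Q₁
          * chunkNormHE n 0 α a Ξ₀ χ Q₂ := by
  have : NeZero m := ⟨by lia⟩
  lift chunkNormHE m 0 α a Ξ₀ χ Q₁ to ℝ≥0 using h₁.chunkNormHE_ne_top with N₁ hN₁
  lift chunkNormHE n 0 α a Ξ₀ χ Q₂ to ℝ≥0 using h₂.chunkNormHE_ne_top with N₂ hN₂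
  have h := (h₁.chunkBound hΞ₀ hN₁.ge).mul hm hα ha hΞ₀ hχ₁ hχ₀
    (h₂.chunkBound hΞ₀ hN₂.ge)
  refine ⟨h.memChunkH, h.chunkNormHE_le.trans_eq ?_⟩
  norm_cast
  ring

end Chunk

theorem stmt_11_general {m : ℕ} (hm : 2 ≤ m) {Ξ₀ : ℝ} (hΞ₀ : 0 < Ξ₀) :
    ∃ C : ℝ≥0∞, C ≠ ⊤ ∧ ∀ n : ℕ, 2 ≤ n → ∀ α ∈ Set.Icc (0 : ℝ) 1, ∀ χ : ℝ → ℝ,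
      (∀ t ≤ 1, χ t = 1) → (∀ t, 2 ≤ t → χ t = 0) → ∀ a : ℝ, 0 < a → ∀ Q₁ Q₂ : ℝ × ℝ → ℝ,
        (MemChunk m 0 a Ξ₀ χ Q₁ → MemChunk n 0 a Ξ₀ χ Q₂ →
          MemChunk n 0 a Ξ₀ χ (fun p ↦ Q₁ p * Q₂ p) ∧
          chunkNormE n 0 a Ξ₀ χ (fun p ↦ Q₁ p * Q₂ p)
            ≤ C * chunkNormE m 0 a Ξ₀ χ Q₁ * chunkNormE n 0 a Ξ₀ χ Q₂) ∧
        (MemChunkH m 0 α a Ξ₀ χ Q₁ → MemChunkH n 0 α a Ξ₀ χ Q₂ →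
          MemChunkH n 0 α a Ξ₀ χ (fun p ↦ Q₁ p * Q₂ p) ∧
          chunkNormHE n 0 α a Ξ₀ χ (fun p ↦ Q₁ p * Q₂ p)
            ≤ C * chunkNormHE m 0 α a Ξ₀ χ Q₁ * chunkNormHE n 0 α a Ξ₀ χ Q₂) := by
  lift Ξ₀ to ℝ≥0 using hΞ₀.le
  refine ⟨(16 * uncutConst m Ξ₀ : ℝ≥0), coe_ne_top, ?_⟩
  rintro n hn α ⟨hα₀, hα₁⟩ χ hχ₁ hχ₀ a ha Q₁ Q₂
  lift α to ℝ≥0 using hα₀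
  have : NeZero n := ⟨by lia⟩
  exact ⟨MemChunk.mul hm hΞ₀ hχ₁ hχ₀ ha, MemChunkH.mul hm hα₁ hΞ₀ hχ₁ hχ₀ ha⟩

/-- **Proposition 8 of the paper (product estimate in the weighted spaces).**
For `m, n ∈ {3,4,5}` there is a constant `C` depending only on `m, n, α, Ξ₀, χ` such that
`‖Q₁Q₂; 𝔠⁰_{(n)}‖ ≤ C ‖Q₁; 𝔠⁰_{(m)}‖ ‖Q₂; 𝔠⁰_{(n)}‖`, and similarly for the Hölder
norms. -/
theorem stmt_11 (m n : ℕ) (hm : m = 3 ∨ m = 4 ∨ m = 5) (hn : n = 3 ∨ n = 4 ∨ n = 5)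
    (α Ξ₀ : ℝ) (hα : α ∈ Set.Ioo (0:ℝ) 1) (hΞ₀ : 0 < Ξ₀)
    (χ : ℝ → ℝ) (hχ : ContDiff ℝ (⊤ : ℕ∞) χ) (hχ1 : ∀ t ≤ (1:ℝ), χ t = 1)
    (hχrange : ∀ t : ℝ, 0 ≤ χ t ∧ χ t ≤ 1) (hχ0 : ∀ t : ℝ, 2 ≤ t → χ t = 0) :
    ∃ C : ℝ≥0∞, C ≠ ⊤ ∧ ∀ a : ℝ, 0 < a → ∀ Q₁ Q₂ : ℝ × ℝ → ℝ,
      (∀ ϖ z : ℝ, Q₁ (ϖ, -z) = Q₁ (ϖ, z)) → (∀ ϖ z : ℝ, Q₂ (ϖ, -z) = Q₂ (ϖ, z)) →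
      (MemChunk m 0 a Ξ₀ χ Q₁ → MemChunk n 0 a Ξ₀ χ Q₂ →
        MemChunk n 0 a Ξ₀ χ (fun p => Q₁ p * Q₂ p) ∧
        chunkNormE n 0 a Ξ₀ χ (fun p => Q₁ p * Q₂ p)
          ≤ C * chunkNormE m 0 a Ξ₀ χ Q₁ * chunkNormE n 0 a Ξ₀ χ Q₂) ∧
      (MemChunkH m 0 α a Ξ₀ χ Q₁ → MemChunkH n 0 α a Ξ₀ χ Q₂ →
        MemChunkH n 0 α a Ξ₀ χ (fun p => Q₁ p * Q₂ p) ∧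
        chunkNormHE n 0 α a Ξ₀ χ (fun p => Q₁ p * Q₂ p)
          ≤ C * chunkNormHE m 0 α a Ξ₀ χ Q₁ * chunkNormHE n 0 α a Ξ₀ χ Q₂) := by
  obtain ⟨C, hC, h⟩ := stmt_11_general (m := m) (by lia) hΞ₀
  exact ⟨C, hC, fun a ha Q₁ Q₂ _ _ ↦ h n (by lia) α ⟨hα.1.le, hα.2.le⟩ χ hχ1 hχ0 a ha Q₁ Q₂⟩

end
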